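/- Fix any r ∈ (0, 1) and any matrix X₀ ∈ ℝ^{n×p}. Over the set Γ ∩ {w : ‖w‖ ≥ r}, the function w ↦ wᵀ∇²g(w; X₀)w/‖w‖² is L-Lipschitz with L ≤ (16 n³/μ²)‖X₀‖_∞³ + (8 n^{3/2}/(μ r))‖X₀‖_∞² + (48 n^{5/2}/μ)‖X₀‖_∞² + 96 n^{5/2} ‖X₀‖_∞. -/

import Mathlib

open MeasureTheory ProbabilityTheory Real Matrix
open scoped RealInnerProductSpace ENNReal NNReal

noncomputable section

/-- The Bernoulli–Gaussian law `BG(θ)`: with probability `θ` a standard Gaussian,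
with probability `1-θ` a point mass at `0`. -/
def bg (θ : ℝ) : Measure ℝ :=
  θ.toNNReal • gaussianReal 0 1 + (1 - θ).toNNReal • Measure.dirac 0

instance bg.instIsFiniteMeasure (θ : ℝ) : IsFiniteMeasure (bg θ) := by
  unfold bg; infer_instance

/-- Law of an `n × p` matrix with i.i.d. `BG(θ)` entries. -/
def bgMatrix (θ : ℝ) (n p : ℕ) : Measure (Fin n → Fin p → ℝ) :=
  Measure.pi fun _ => Measure.pi fun _ => bg θ

/-- Law of a vector in `ℝ^n` with i.i.d. `BG(θ)` entries. -/
def bgVec (θ : ℝ) (n : ℕ) : Measure (Fin n → ℝ) :=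
  Measure.pi fun _ => bg θ

/-- The smooth sparsity surrogate `h_μ(z) = μ log cosh (z/μ)`. -/
def hmu (μ z : ℝ) : ℝ := μ * Real.log (Real.cosh (z / μ))

/-- Reparametrization `q(w) = (w, √(1-‖w‖²))` with `w` in the unit ball of `ℝ^{n-1}`. -/
def qmap (n : ℕ) (w : EuclideanSpace ℝ (Fin (n - 1))) : Fin n → ℝ :=
  fun i => if h : (i : ℕ) < n - 1 then w ⟨i, h⟩ else Real.sqrt (1 - ‖w‖ ^ 2)

/-- `f(q; Y) = (1/p) ∑ₖ h_μ(qᵀ yₖ)`. -/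
def ffun (n p : ℕ) (μ : ℝ) (Y : Matrix (Fin n) (Fin p) ℝ)
    (q : EuclideanSpace ℝ (Fin n)) : ℝ :=
  (p : ℝ)⁻¹ * ∑ k : Fin p, hmu μ (∑ i : Fin n, q i * Y i k)

/-- `g(w; Y) = f(q(w); Y)`. -/
def gfun (n p : ℕ) (μ : ℝ) (Y : Matrix (Fin n) (Fin p) ℝ)
    (w : EuclideanSpace ℝ (Fin (n - 1))) : ℝ :=
  (p : ℝ)⁻¹ * ∑ k : Fin p, hmu μ (∑ i : Fin n, qmap n w i * Y i k)

/-- Gradient `∇g(w; Y)` in `w`. -/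
def gradg (n p : ℕ) (μ : ℝ) (Y : Matrix (Fin n) (Fin p) ℝ)
    (w : EuclideanSpace ℝ (Fin (n - 1))) : EuclideanSpace ℝ (Fin (n - 1)) :=
  gradient (gfun n p μ Y) w

/-- Hessian `∇²g(w; Y)` in `w`, as a continuous linear map. -/
def hessg (n p : ℕ) (μ : ℝ) (Y : Matrix (Fin n) (Fin p) ℝ)
    (w : EuclideanSpace ℝ (Fin (n - 1))) :
    EuclideanSpace ℝ (Fin (n - 1)) →L[ℝ] EuclideanSpace ℝ (Fin (n - 1)) :=
  fderiv ℝ (gradg n p μ Y) w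

/-- The set `Γ = {w : ‖w‖ < √((4n-1)/(4n))}`. -/
def GammaSet (n : ℕ) : Set (EuclideanSpace ℝ (Fin (n - 1))) :=
  {w | ‖w‖ < Real.sqrt ((4 * (n : ℝ) - 1) / (4 * n))}

/-- Spectral (`ℓ²→ℓ²` operator) norm of а matrix. -/
def specNorm {m k : ℕ} (M : Matrix (Fin m) (Fin k) ℝ) : ℝ :=
  ‖LinearMap.toContinuousLinearMap (Matrix.toEuclideanLin M)‖

/-- Largest magnitude of an entry of a matrix. -/
def Minf {m k : ℕ} (M : Matrix (Fin m) (Fin k) ℝ) : ℝ := ⨆ i, ⨆ j, |M i j|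

/-- Condition number: ratio of largest to smallest singular value. -/
def kappa {n : ℕ} (s : Fin n → ℝ) : ℝ := (⨆ i, s i) / (⨅ i, s i)

/-- Signed standard basis vectors `{± e_i}` of `ℝ^n`. -/
def SignedBasis (n : ℕ) : Set (EuclideanSpace ℝ (Fin n)) :=
  {b | ∃ i : Fin n, b = EuclideanSpace.single i (1 : ℝ) ∨ b = -EuclideanSpace.single i (1 : ℝ)}

/-- Set of local minimizers of `f(·; Y)` over the unit sphere `S^{n-1}`. -/
def LocalMins (n p : ℕ) (μ : ℝ) (Y : Matrix (Fin n) (Fin p) ℝ) :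
    Set (EuclideanSpace ℝ (Fin n)) :=
  {q | q ∈ Metric.sphere (0 : EuclideanSpace ℝ (Fin n)) 1 ∧
       IsLocalMinOn (ffun n p μ Y) (Metric.sphere (0 : EuclideanSpace ℝ (Fin n)) 1) q}

/-- Expected objective `E_x[h_μ(q(w)ᵀ x)]` for `x` with i.i.d. `BG(θ)` entries. -/
def Gexp (n : ℕ) (θ μ : ℝ) (w : EuclideanSpace ℝ (Fin (n - 1))) : ℝ :=
  ∫ x, hmu μ (∑ i : Fin n, qmap n w i * x i) ∂(bgVec θ n)

lemma hasDerivAt_tanh_one_sub_sq (x : ℝ) : HasDerivAt Real.tanh (1 - Real.tanh x ^ 2) x := by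
  have hc : Real.cosh x ≠ 0 := (Real.cosh_pos x).ne'
  have h := (Real.hasDerivAt_sinh x).div (Real.hasDerivAt_cosh x) hc
  have hfun : Real.tanh = Real.sinh / Real.cosh := by
    ext y; simp [Real.tanh_eq_sinh_div_cosh]
  rw [← hfun] at h
  refine h.congr_deriv ?_
  rw [Real.tanh_eq_sinh_div_cosh]
  field_simp

lemma tanh_sq_le_one (x : ℝ) : Real.tanh x ^ 2 ≤ 1 := by
  rw [Real.tanh_eq_sinh_div_cosh, div_pow, div_le_one (by positivity [Real.cosh_pos x])]
  nlinarith [Real.cosh_sq x]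

lemma abs_tanh_le_one (x : ℝ) : |Real.tanh x| ≤ 1 :=
  abs_le_one_iff_mul_self_le_one.2 (by nlinarith [tanh_sq_le_one x])

lemma abs_tanh_sub_tanh_le (x y : ℝ) : |Real.tanh x - Real.tanh y| ≤ |x - y| := by
  have h := Convex.norm_image_sub_le_of_norm_hasDerivWithin_le (f := Real.tanh)
    (f' := fun x => 1 - Real.tanh x ^ 2) (C := 1) (s := Set.univ) (x := y) (y := x)
    (fun x _ => (hasDerivAt_tanh_one_sub_sq x).hasDerivWithinAt)
    (fun x _ => by
      rw [Real.norm_eq_abs, abs_le]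
      constructor <;> nlinarith [tanh_sq_le_one x, sq_nonneg (Real.tanh x)])
    convex_univ (Set.mem_univ _) (Set.mem_univ _)
  simpa using h

lemma hasDerivAt_hmu {μ : ℝ} (hμ : 0 < μ) (z : ℝ) :
    HasDerivAt (hmu μ) (Real.tanh (z / μ)) z := by
  have h := ((((hasDerivAt_id z).div_const μ).cosh).log (Real.cosh_pos _).ne').const_mul μ
  refine HasDerivAt.congr_deriv (f := hmu μ) h ?_
  rw [Real.tanh_eq_sinh_div_cosh]
  simp only [id_eq]
  field_simp

/-! ### Lipschitz bounds for the radial profile `t ↦ √(1 - t²)` -/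

lemma hasDerivAt_sqrt_one_sub_sq {t : ℝ} (ht : 0 < 1 - t ^ 2) :
    HasDerivAt (fun t : ℝ => √(1 - t ^ 2)) (-(t / √(1 - t ^ 2))) t := by
  have h := ((hasDerivAt_pow 2 t).const_sub 1).sqrt ht.ne'
  refine h.congr_deriv ?_
  norm_num
  ring

lemma le_sqrt_one_sub_sq {c T t : ℝ} (hT : c ^ 2 ≤ 1 - T ^ 2)
    (ht : t ∈ Set.Icc 0 T) : c ≤ √(1 - t ^ 2) :=
  Real.le_sqrt_of_sq_le (by nlinarith [ht.1, ht.2])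

lemma one_sub_sq_pos {c T t : ℝ} (hc : 0 < c) (hT : c ^ 2 ≤ 1 - T ^ 2)
    (ht : t ∈ Set.Icc 0 T) : 0 < 1 - t ^ 2 := by
  nlinarith [ht.1, ht.2, pow_pos hc 2]

lemma div_sqrt_one_sub_sq_le {c T t : ℝ} (hc : 0 < c) (hT : c ^ 2 ≤ 1 - T ^ 2)
    (ht : t ∈ Set.Icc 0 T) : t / √(1 - t ^ 2) ≤ T / c :=
  div_le_div₀ (ht.1.trans ht.2) ht.2 hc (le_sqrt_one_sub_sq hT ht)

lemma abs_sqrt_one_sub_sq_sub_le {c T t t' : ℝ} (hc : 0 < c) (hT : c ^ 2 ≤ 1 - T ^ 2)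
    (ht : t ∈ Set.Icc 0 T) (ht' : t' ∈ Set.Icc 0 T) :
    |√(1 - t ^ 2) - √(1 - t' ^ 2)| ≤ T / c * |t - t'| := by
  refine Convex.norm_image_sub_le_of_norm_hasDerivWithin_le (s := Set.Icc 0 T)
    (f := fun t : ℝ => √(1 - t ^ 2))
    (fun x hx => (hasDerivAt_sqrt_one_sub_sq (one_sub_sq_pos hc hT hx)).hasDerivWithinAt)
    (fun x hx => ?_) (convex_Icc 0 T) ht' ht
  rw [norm_neg, Real.norm_eq_abs, abs_of_nonneg (div_nonneg hx.1 (Real.sqrt_nonneg _))]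
  exact div_sqrt_one_sub_sq_le hc hT hx

lemma hasDerivAt_div_sqrt_one_sub_sq {t : ℝ} (ht : 0 < 1 - t ^ 2) :
    HasDerivAt (fun t : ℝ => t / √(1 - t ^ 2)) (1 / √(1 - t ^ 2) ^ 3) t := by
  have hs := Real.sqrt_pos.2 ht
  have h := (hasDerivAt_id t).div (hasDerivAt_sqrt_one_sub_sq ht) hs.ne'
  refine HasDerivAt.congr_deriv (f := fun t : ℝ => t / √(1 - t ^ 2)) h ?_
  have hsq := Real.sq_sqrt ht.le
  simp only [id_eq]
  field_simp
  linarith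

lemma abs_div_sqrt_one_sub_sq_sub_le {c T t t' : ℝ} (hc : 0 < c) (hT : c ^ 2 ≤ 1 - T ^ 2)
    (ht : t ∈ Set.Icc 0 T) (ht' : t' ∈ Set.Icc 0 T) :
    |t / √(1 - t ^ 2) - t' / √(1 - t' ^ 2)| ≤ 1 / c ^ 3 * |t - t'| := by
  refine Convex.norm_image_sub_le_of_norm_hasDerivWithin_le (s := Set.Icc 0 T)
    (f := fun t : ℝ => t / √(1 - t ^ 2))
    (fun x hx => (hasDerivAt_div_sqrt_one_sub_sq (one_sub_sq_pos hc hT hx)).hasDerivWithinAt)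
    (fun x hx => ?_) (convex_Icc 0 T) ht' ht
  rw [Real.norm_eq_abs, abs_of_nonneg (by positivity)]
  gcongr
  exact le_sqrt_one_sub_sq hT hx

lemma hasDerivAt_one_div_sqrt_one_sub_sq_cube {t : ℝ} (ht : 0 < 1 - t ^ 2) :
    HasDerivAt (fun t : ℝ => 1 / √(1 - t ^ 2) ^ 3) (3 * t / √(1 - t ^ 2) ^ 5) t := by
  have hs := Real.sqrt_pos.2 ht
  have h := (hasDerivAt_const t (1 : ℝ)).div ((hasDerivAt_sqrt_one_sub_sq ht).pow 3)
    (pow_ne_zero 3 hs.ne')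
  refine HasDerivAt.congr_deriv (f := fun t : ℝ => 1 / √(1 - t ^ 2) ^ 3) h ?_
  simp only [Pi.pow_apply]
  field_simp
  ring

lemma abs_one_div_sqrt_one_sub_sq_cube_sub_le {c T t t' : ℝ} (hc : 0 < c)
    (hT : c ^ 2 ≤ 1 - T ^ 2) (ht : t ∈ Set.Icc 0 T) (ht' : t' ∈ Set.Icc 0 T) :
    |1 / √(1 - t ^ 2) ^ 3 - 1 / √(1 - t' ^ 2) ^ 3| ≤ 3 / c ^ 5 * |t - t'| := by
  refine Convex.norm_image_sub_le_of_norm_hasDerivWithin_le (s := Set.Icc 0 T)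
    (f := fun t : ℝ => 1 / √(1 - t ^ 2) ^ 3)
    (fun x hx => (hasDerivAt_one_div_sqrt_one_sub_sq_cube
      (one_sub_sq_pos hc hT hx)).hasDerivWithinAt)
    (fun x hx => ?_) (convex_Icc 0 T) ht' ht
  have h0 := hx.1
  rw [Real.norm_eq_abs, abs_of_nonneg (by positivity)]
  have h1 : x ≤ 1 := by nlinarith [one_sub_sq_pos hc hT hx]
  have h2 := le_sqrt_one_sub_sq hT hx
  gcongr
  linarith

lemma add_div_mul_abs_le {c T K v a : ℝ} (hc : 0 < c) (hK : 0 ≤ K)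
    (hT : c ^ 2 ≤ 1 - T ^ 2) (hu : v ^ 2 + a ^ 2 ≤ K ^ 2) :
    v + T / c * |a| ≤ K / c := by
  rw [le_div_iff₀ hc]
  have e : (v + T / c * |a|) * c = c * v + T * |a| := by field_simp
  rw [e]
  refine abs_le_of_sq_le_sq' ?_ hK |>.2
  rw [← sq_abs a] at hu
  nlinarith [sq_nonneg (c * |a| - T * v), sq_nonneg v, sq_nonneg |a|,
    mul_le_mul_of_nonneg_left hu (by positivity : 0 ≤ c ^ 2 + T ^ 2)]

/-! ### The quadratic form of the Hessian for a single sample -/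

section Abstract

variable {E : Type*} [NormedAddCommGroup E] [InnerProductSpace ℝ E]

lemma norm_inv_norm_smul_sub_le {r : ℝ} (hr : 0 < r) {w w' : E} (hw : r ≤ ‖w‖) (hw' : r ≤ ‖w'‖) :
    ‖(‖w‖⁻¹ • w) - (‖w'‖⁻¹ • w')‖ ≤ 2 / r * ‖w - w'‖ := by
  have h0 : 0 < ‖w‖ := hr.trans_le hw
  have h0' : 0 < ‖w'‖ := hr.trans_le hw'
  have key : (‖w‖⁻¹ • w) - (‖w'‖⁻¹ • w') =
      ‖w‖⁻¹ • ((w - w') + ((‖w'‖ - ‖w‖) * ‖w'‖⁻¹) • w') := by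
    rw [smul_add, smul_sub, smul_smul, sub_add, ← sub_smul]
    congr 2
    field_simp
    ring
  rw [key, norm_smul, norm_inv, norm_norm]
  have h1 : ‖((‖w'‖ - ‖w‖) * ‖w'‖⁻¹) • w'‖ ≤ ‖w - w'‖ := by
    rw [norm_smul, norm_mul, norm_inv, norm_norm, mul_assoc, inv_mul_cancel₀ h0'.ne', mul_one,
      Real.norm_eq_abs, abs_sub_comm]
    exact abs_norm_sub_norm_le w w'
  have h2 : ‖w‖⁻¹ ≤ r⁻¹ := inv_anti₀ hr hw
  calc ‖w‖⁻¹ * ‖(w - w') + ((‖w'‖ - ‖w‖) * ‖w'‖⁻¹) • w'‖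
      ≤ r⁻¹ * (‖w - w'‖ + ‖w - w'‖) := by
        gcongr
        exact (norm_add_le _ _).trans (by gcongr)
    _ = 2 / r * ‖w - w'‖ := by ring

/-- The pairing `q(w)ᵀ x` for the sample `x = (u, a)`. -/
def pairing (u : E) (a : ℝ) (w : E) : ℝ := ⟪w, u⟫ + √(1 - ‖w‖ ^ 2) * a

/-- The derivative of `q(w)ᵀ x` in the radial direction `w / ‖w‖`. -/
def radialDeriv (u : E) (a : ℝ) (w : E) : ℝ :=
  ⟪‖w‖⁻¹ • w, u⟫ - ‖w‖ / √(1 - ‖w‖ ^ 2) * a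

/-- The second derivative of `w ↦ h_μ(q(w)ᵀ x)` in the radial direction `w / ‖w‖`. -/
def radialSecondDeriv (μ : ℝ) (u : E) (a : ℝ) (w : E) : ℝ :=
  1 / μ * (1 - Real.tanh (pairing u a w / μ) ^ 2) * radialDeriv u a w ^ 2
    - Real.tanh (pairing u a w / μ) * (a * (1 / √(1 - ‖w‖ ^ 2) ^ 3))

lemma abs_pairing_sub_le {c T K a : ℝ} {u w w' : E} (hc : 0 < c) (hK : 0 ≤ K)
    (hT : c ^ 2 ≤ 1 - T ^ 2) (hu : ‖u‖ ^ 2 + a ^ 2 ≤ K ^ 2) (hw : ‖w‖ ≤ T) (hw' : ‖w'‖ ≤ T) :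
    |pairing u a w - pairing u a w'| ≤ K / c * ‖w - w'‖ := by
  have e : pairing u a w - pairing u a w' =
      ⟪w - w', u⟫ + (√(1 - ‖w‖ ^ 2) - √(1 - ‖w'‖ ^ 2)) * a := by
    simp only [pairing, inner_sub_left]; ring
  have hT0 : 0 ≤ T := (norm_nonneg w).trans hw
  have h1 := abs_sqrt_one_sub_sq_sub_le hc hT ⟨norm_nonneg w, hw⟩ ⟨norm_nonneg w', hw'⟩
  have h2 : |√(1 - ‖w‖ ^ 2) - √(1 - ‖w'‖ ^ 2)| ≤ T / c * ‖w - w'‖ :=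
    h1.trans (by gcongr; exact abs_norm_sub_norm_le w w')
  rw [e]
  calc _ ≤ |⟪w - w', u⟫| + |(√(1 - ‖w‖ ^ 2) - √(1 - ‖w'‖ ^ 2)) * a| := abs_add_le _ _
    _ ≤ ‖w - w'‖ * ‖u‖ + T / c * ‖w - w'‖ * |a| := by
        rw [abs_mul]
        gcongr
        exact abs_real_inner_le_norm _ _
    _ = (‖u‖ + T / c * |a|) * ‖w - w'‖ := by ring
    _ ≤ _ := by gcongr; exact add_div_mul_abs_le hc hK hT hu

lemma abs_radialDeriv_le {c T K a : ℝ} {u w : E} (hc : 0 < c) (hK : 0 ≤ K)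
    (hT : c ^ 2 ≤ 1 - T ^ 2) (hu : ‖u‖ ^ 2 + a ^ 2 ≤ K ^ 2) (hw : ‖w‖ ≤ T) :
    |radialDeriv u a w| ≤ K / c := by
  have h1 := div_sqrt_one_sub_sq_le hc hT ⟨norm_nonneg w, hw⟩
  have h2 : ‖(‖w‖⁻¹ • w)‖ ≤ 1 := by
    rw [norm_smul, norm_inv, norm_norm]
    exact inv_mul_le_one
  calc |radialDeriv u a w| ≤ |⟪‖w‖⁻¹ • w, u⟫| + |‖w‖ / √(1 - ‖w‖ ^ 2) * a| := abs_sub _ _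
    _ ≤ 1 * ‖u‖ + T / c * |a| := by
        rw [abs_mul, abs_of_nonneg (div_nonneg (norm_nonneg w) (Real.sqrt_nonneg _))]
        gcongr
        exact (abs_real_inner_le_norm _ _).trans (by gcongr)
    _ ≤ K / c := by rw [one_mul]; exact add_div_mul_abs_le hc hK hT hu

lemma abs_radialDeriv_sub_le {c r T K a : ℝ} {u w w' : E} (hc : 0 < c) (hr : 0 < r)
    (hT : c ^ 2 ≤ 1 - T ^ 2) (hu : ‖u‖ ≤ K)
    (hw : ‖w‖ ≤ T) (hw' : ‖w'‖ ≤ T) (hrw : r ≤ ‖w‖) (hrw' : r ≤ ‖w'‖) :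
    |radialDeriv u a w - radialDeriv u a w'| ≤ (2 / r * K + 1 / c ^ 3 * |a|) * ‖w - w'‖ := by
  have e : radialDeriv u a w - radialDeriv u a w' = ⟪‖w‖⁻¹ • w - ‖w'‖⁻¹ • w', u⟫ -
      (‖w‖ / √(1 - ‖w‖ ^ 2) - ‖w'‖ / √(1 - ‖w'‖ ^ 2)) * a := by
    simp only [radialDeriv, inner_sub_left]; ring
  have h1 := abs_div_sqrt_one_sub_sq_sub_le hc hT ⟨norm_nonneg w, hw⟩ ⟨norm_nonneg w', hw'⟩
  have h2 : |‖w‖ / √(1 - ‖w‖ ^ 2) - ‖w'‖ / √(1 - ‖w'‖ ^ 2)| ≤ 1 / c ^ 3 * ‖w - w'‖ :=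
    h1.trans (by gcongr; exact abs_norm_sub_norm_le w w')
  have h3 := norm_inv_norm_smul_sub_le hr hrw hrw'
  rw [e]
  calc _ ≤ |⟪‖w‖⁻¹ • w - ‖w'‖⁻¹ • w', u⟫| +
        |(‖w‖ / √(1 - ‖w‖ ^ 2) - ‖w'‖ / √(1 - ‖w'‖ ^ 2)) * a| := abs_sub _ _
    _ ≤ 2 / r * ‖w - w'‖ * K + 1 / c ^ 3 * ‖w - w'‖ * |a| := by
        rw [abs_mul]
        gcongr
        exact (abs_real_inner_le_norm _ _).trans (by gcongr)
    _ = _ := by ring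

lemma abs_radialSecondDeriv_sub_le {μ c r T K B a : ℝ} {u w w' : E} (hμ : 0 < μ) (hc : 0 < c)
    (hr : 0 < r) (hK : 0 ≤ K) (hT : c ^ 2 ≤ 1 - T ^ 2) (hu : ‖u‖ ^ 2 + a ^ 2 ≤ K ^ 2)
    (ha : |a| ≤ B) (hw : ‖w‖ ≤ T) (hw' : ‖w'‖ ≤ T) (hrw : r ≤ ‖w‖) (hrw' : r ≤ ‖w'‖) :
    |radialSecondDeriv μ u a w - radialSecondDeriv μ u a w'| ≤
      (2 / μ ^ 2 * (K / c) ^ 3 + 2 / μ * (K / c) * (2 / r * K + 1 / c ^ 3 * B)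
        + 1 / μ * (K / c) * B / c ^ 3 + 3 / c ^ 5 * B) * ‖w - w'‖ := by
  have hB : 0 ≤ B := (abs_nonneg a).trans ha
  have huK : ‖u‖ ≤ K := abs_le_of_sq_le_sq' (by nlinarith [sq_nonneg a]) hK |>.2
  have hz := abs_pairing_sub_le hc hK hT hu hw hw'
  have hb := abs_radialDeriv_le hc hK hT hu hw
  have hb' := abs_radialDeriv_le hc hK hT hu hw'
  have hbb := abs_radialDeriv_sub_le (a := a) hc hr hT huK hw hw' hrw hrw'
  have hs := le_sqrt_one_sub_sq hT ⟨norm_nonneg w, hw⟩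
  have hss := abs_one_div_sqrt_one_sub_sq_cube_sub_le hc hT ⟨norm_nonneg w, hw⟩
    ⟨norm_nonneg w', hw'⟩
  have hss' := hss.trans (mul_le_mul_of_nonneg_left (abs_norm_sub_norm_le w w')
    (by positivity : 0 ≤ 3 / c ^ 5))
  have hs3 : |1 / √(1 - ‖w‖ ^ 2) ^ 3| ≤ 1 / c ^ 3 := by
    rw [abs_of_nonneg (by positivity)]; gcongr
  have hτ : |Real.tanh (pairing u a w / μ) - Real.tanh (pairing u a w' / μ)| ≤
      1 / μ * (K / c) * ‖w - w'‖ := by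
    refine (abs_tanh_sub_tanh_le _ _).trans ?_
    rw [← sub_div, abs_div, abs_of_pos hμ, div_le_iff₀ hμ]
    refine hz.trans (le_of_eq ?_)
    field_simp
  have hτ1 := abs_tanh_le_one (pairing u a w / μ)
  have hτ1' := abs_tanh_le_one (pairing u a w' / μ)
  have hτ2' := tanh_sq_le_one (pairing u a w' / μ)
  unfold radialSecondDeriv
  generalize Real.tanh (pairing u a w / μ) = τ at *
  generalize Real.tanh (pairing u a w' / μ) = τ' at *
  generalize radialDeriv u a w = b at *
  generalize radialDeriv u a w' = b' at *
  generalize 1 / √(1 - ‖w‖ ^ 2) ^ 3 = σ at *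
  generalize 1 / √(1 - ‖w'‖ ^ 2) ^ 3 = σ' at *
  have e : 1 / μ * (1 - τ ^ 2) * b ^ 2 - τ * (a * σ) - (1 / μ * (1 - τ' ^ 2) * b' ^ 2 - τ' * (a * σ'))
      = -(1 / μ * ((τ - τ') * (τ + τ') * b ^ 2)) + 1 / μ * ((1 - τ' ^ 2) * ((b - b') * (b + b')))
        - (τ - τ') * a * σ - τ' * a * (σ - σ') := by ring
  have hμ' : 0 ≤ 1 / μ := by positivity
  have hD := norm_nonneg (w - w')
  have hKc : 0 ≤ K / c := by positivity
  have t1 : |1 / μ * ((τ - τ') * (τ + τ') * b ^ 2)| ≤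
      1 / μ * (1 / μ * (K / c) * ‖w - w'‖ * (1 + 1) * (K / c) ^ 2) := by
    rw [abs_mul, abs_of_nonneg hμ', abs_mul, abs_mul, abs_pow]
    gcongr
    exact (abs_add_le _ _).trans (by gcongr)
  have t2 : |1 / μ * ((1 - τ' ^ 2) * ((b - b') * (b + b')))| ≤
      1 / μ * (1 * ((2 / r * K + 1 / c ^ 3 * B) * ‖w - w'‖ * (K / c + K / c))) := by
    rw [abs_mul, abs_of_nonneg hμ', abs_mul, abs_mul]
    gcongr
    · rw [abs_le]; constructor <;> nlinarith [sq_nonneg τ']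
    · exact hbb.trans (by gcongr)
    · exact (abs_add_le _ _).trans (by gcongr)
  have t3 : |(τ - τ') * a * σ| ≤ 1 / μ * (K / c) * ‖w - w'‖ * B * (1 / c ^ 3) := by
    rw [abs_mul, abs_mul]
    gcongr
  have t4 : |τ' * a * (σ - σ')| ≤ 1 * B * (3 / c ^ 5 * ‖w - w'‖) := by
    rw [abs_mul, abs_mul]
    gcongr
  rw [e]
  calc _ ≤ |1 / μ * ((τ - τ') * (τ + τ') * b ^ 2)|
        + |1 / μ * ((1 - τ' ^ 2) * ((b - b') * (b + b')))|
        + |(τ - τ') * a * σ| + |τ' * a * (σ - σ')| := by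
        refine (abs_sub _ _).trans ?_
        gcongr
        refine (abs_sub _ _).trans ?_
        gcongr
        refine (abs_add_le _ _).trans ?_
        rw [abs_neg]
    _ ≤ _ := add_le_add (add_le_add (add_le_add t1 t2) t3) t4
    _ = _ := by ring

lemma inner_fderiv_gradient_self [CompleteSpace E] {g : E → ℝ} {w : E} (hg : ContDiffAt ℝ 2 g w)
    {G' : ℝ → ℝ} {G'' : ℝ} (h' : ∀ᶠ τ in nhds (1 : ℝ), HasDerivAt (fun τ => g (τ • w)) (G' τ) τ)
    (h'' : HasDerivAt G' G'' 1) : ⟪fderiv ℝ (gradient g) w w, w⟫ = G'' := by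
  have hline : ∀ τ : ℝ, HasDerivAt (fun τ : ℝ => τ • w) w τ := fun τ => by
    simpa using (hasDerivAt_id τ).smul_const w
  have hgrad : DifferentiableAt ℝ (gradient g) w := by
    have h1 : DifferentiableAt ℝ (fderiv ℝ g) w :=
      (hg.fderiv_right (m := 1) (by norm_num)).differentiableAt (by norm_num)
    exact (InnerProductSpace.toDual ℝ E).symm.toContinuousLinearEquiv.differentiableAt.comp w h1
  have hgrad1 : HasFDerivAt (gradient g) (fderiv ℝ (gradient g) w) ((1 : ℝ) • w) := by
    simpa using hgrad.hasFDerivAt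
  have hd : HasDerivAt (fun τ : ℝ => ⟪gradient g (τ • w), w⟫)
      ⟪fderiv ℝ (gradient g) w w, w⟫ 1 := by
    simpa using (hgrad1.comp_hasDerivAt 1 (hline 1)).inner ℝ (hasDerivAt_const (1 : ℝ) w)
  have hdiff : ∀ᶠ τ in nhds (1 : ℝ), DifferentiableAt ℝ g (τ • w) := by
    have h1 : ∀ᶠ x in nhds w, DifferentiableAt ℝ g x :=
      (hg.eventually (by norm_num)).mono fun x hx => hx.differentiableAt (by norm_num)
    have h2 : Filter.Tendsto (fun τ : ℝ => τ • w) (nhds 1) (nhds w) := by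
      simpa using (hline 1).continuousAt.tendsto
    exact h2.eventually h1
  refine hd.unique (h''.congr_of_eventuallyEq ?_)
  filter_upwards [h', hdiff] with τ hτ hdτ
  have h1 := hdτ.hasFDerivAt.comp_hasDerivAt τ (hline τ)
  have h2 : ⟪gradient g (τ • w), w⟫ = fderiv ℝ g (τ • w) w := by
    rw [← toDual_gradient, InnerProductSpace.toDual_apply_apply]
  rw [h2]
  exact h1.unique hτ

lemma contDiff_hmu (μ : ℝ) : ContDiff ℝ 2 (hmu μ) :=
  contDiff_const.mul ((Real.contDiff_cosh.comp (contDiff_id.div_const μ)).log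
    fun _ => (Real.cosh_pos _).ne')

lemma contDiffAt_pairing (u : E) (a : ℝ) {w : E} (hw : ‖w‖ < 1) :
    ContDiffAt ℝ 2 (pairing u a) w := by
  have h : 1 - ‖w‖ ^ 2 ≠ 0 := by nlinarith [norm_nonneg w]
  exact (contDiffAt_id.inner ℝ contDiffAt_const).add
    (((contDiffAt_const.sub (contDiff_norm_sq ℝ).contDiffAt).sqrt h).mul contDiffAt_const)

lemma pairing_smul (u : E) (a : ℝ) (w : E) {τ : ℝ} (hw : 0 < ‖w‖) :
    pairing u a (τ • w) =
      ‖w‖ * τ * ⟪‖w‖⁻¹ • w, u⟫ + √(1 - (‖w‖ * τ) ^ 2) * a := by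
  have h : ‖τ • w‖ ^ 2 = (‖w‖ * τ) ^ 2 := by
    rw [norm_smul, mul_pow, mul_pow, Real.norm_eq_abs, sq_abs, mul_comm]
  simp only [pairing, h, real_inner_smul_left]
  field_simp

lemma hasDerivAt_pairing_smul (u : E) (a : ℝ) {w : E} {τ : ℝ} (hw : 0 < ‖w‖)
    (hτ : 0 < 1 - (‖w‖ * τ) ^ 2) :
    HasDerivAt (fun τ : ℝ => pairing u a (τ • w))
      (‖w‖ * (⟪‖w‖⁻¹ • w, u⟫ - ‖w‖ * τ / √(1 - (‖w‖ * τ) ^ 2) * a)) τ := by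
  simp only [pairing_smul u a w hw]
  have hlin : HasDerivAt (fun τ : ℝ => ‖w‖ * τ) ‖w‖ τ := by
    simpa using (hasDerivAt_id τ).const_mul ‖w‖
  have hs := (hasDerivAt_sqrt_one_sub_sq hτ).comp τ hlin
  refine ((hlin.mul_const ⟪‖w‖⁻¹ • w, u⟫).add (hs.mul_const a)).congr_deriv ?_
  ring

/-- The quadratic form of the Hessian of an average of `h_μ(q(w)ᵀ x)` over samples. -/
lemma inner_fderiv_gradient_average [CompleteSpace E] {ι : Type*} (s : Finset ι) {μ : ℝ}
    (hμ : 0 < μ) (c : ℝ) (u : ι → E) (a : ι → ℝ) {w : E} (hw0 : 0 < ‖w‖) (hw : ‖w‖ < 1) :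
    ⟪fderiv ℝ (gradient fun w => c * ∑ k ∈ s, hmu μ (pairing (u k) (a k) w)) w w, w⟫ / ‖w‖ ^ 2 =
      c * ∑ k ∈ s, radialSecondDeriv μ (u k) (a k) w := by
  have hg : ContDiffAt ℝ 2 (fun w => c * ∑ k ∈ s, hmu μ (pairing (u k) (a k) w)) w :=
    contDiffAt_const.mul (ContDiffAt.sum fun k _ =>
      (contDiff_hmu μ).contDiffAt.comp w (contDiffAt_pairing (u k) (a k) hw))
  have hpos : ∀ᶠ τ in nhds (1 : ℝ), 0 < 1 - (‖w‖ * τ) ^ 2 := by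
    have hcont : Continuous fun τ : ℝ => 1 - (‖w‖ * τ) ^ 2 := by fun_prop
    exact hcont.continuousAt.eventually_const_lt (by nlinarith)
  have hlin : HasDerivAt (fun τ : ℝ => ‖w‖ * τ) ‖w‖ 1 := by
    simpa using (hasDerivAt_id (1 : ℝ)).const_mul ‖w‖
  have h1 : 0 < 1 - (‖w‖ * 1) ^ 2 := hpos.self_of_nhds
  have key := inner_fderiv_gradient_self hg
    (G' := fun τ => c * ∑ k ∈ s, Real.tanh (pairing (u k) (a k) (τ • w) / μ) *
      (‖w‖ * (⟪‖w‖⁻¹ • w, u k⟫ - ‖w‖ * τ / √(1 - (‖w‖ * τ) ^ 2) * a k)))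
    (G'' := c * ∑ k ∈ s, ‖w‖ ^ 2 * radialSecondDeriv μ (u k) (a k) w) ?_ ?_
  · rw [key, ← Finset.mul_sum]
    field_simp
  · filter_upwards [hpos] with τ hτ
    exact (HasDerivAt.fun_sum fun k _ =>
      (hasDerivAt_hmu hμ _).comp τ (hasDerivAt_pairing_smul (u k) (a k) hw0 hτ)).const_mul c
  · refine (HasDerivAt.fun_sum fun k _ => ?_).const_mul c
    have ht := (hasDerivAt_tanh_one_sub_sq _).comp (1 : ℝ)
      ((hasDerivAt_pairing_smul (u k) (a k) hw0 h1).div_const μ)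
    have hq := ((((hasDerivAt_div_sqrt_one_sub_sq h1).comp (1 : ℝ) hlin).mul_const
      (a k)).const_sub ⟪‖w‖⁻¹ • w, u k⟫).const_mul ‖w‖
    refine (ht.mul hq).congr_deriv ?_
    simp only [radialSecondDeriv, radialDeriv, Function.comp_apply, mul_one, one_smul]
    field_simp
    ring

end Abstract

lemma abs_le_Minf {m k : ℕ} (M : Matrix (Fin m) (Fin k) ℝ) (i : Fin m) (j : Fin k) :
    |M i j| ≤ Minf M :=
  (le_ciSup (Set.finite_range fun j => |M i j|).bddAbove j).trans
    (le_ciSup (Set.finite_range fun i => ⨆ j, |M i j|).bddAbove i)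

lemma Minf_nonneg {m k : ℕ} (M : Matrix (Fin m) (Fin k) ℝ) : 0 ≤ Minf M :=
  Real.iSup_nonneg fun _ => Real.iSup_nonneg fun _ => abs_nonneg _

lemma gfun_succ_eq (m p : ℕ) (μ : ℝ) (Y : Matrix (Fin (m + 1)) (Fin p) ℝ) :
    gfun (m + 1) p μ Y = fun w : EuclideanSpace ℝ (Fin m) => (p : ℝ)⁻¹ * ∑ k : Fin p,
      hmu μ (pairing (WithLp.toLp 2 fun i => Y i.castSucc k) (Y (Fin.last m) k) w) := by
  funext w
  unfold gfun
  congr 1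
  refine Finset.sum_congr rfl fun k _ => ?_
  congr 1
  rw [Fin.sum_univ_castSucc, pairing, PiLp.inner_apply]
  congr 1
  · refine Finset.sum_congr rfl fun i _ => ?_
    simp [qmap, mul_comm]
  · simp [qmap]

lemma norm_sq_add_sq_le_Minf (m p : ℕ) (Y : Matrix (Fin (m + 1)) (Fin p) ℝ) (k : Fin p) :
    ‖(WithLp.toLp 2 fun i => Y i.castSucc k : EuclideanSpace ℝ (Fin m))‖ ^ 2
      + Y (Fin.last m) k ^ 2 ≤ (√((m + 1 : ℕ) : ℝ) * Minf Y) ^ 2 := by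
  have h : ∀ i, Y i k ^ 2 ≤ Minf Y ^ 2 := fun i =>
    sq_le_sq' (by linarith [neg_abs_le (Y i k), abs_le_Minf Y i k])
      ((le_abs_self _).trans (abs_le_Minf Y i k))
  rw [EuclideanSpace.norm_sq_eq, mul_pow, Real.sq_sqrt (by positivity)]
  simp only [Real.norm_eq_abs, sq_abs]
  rw [← Fin.sum_univ_castSucc (fun i => Y i k ^ 2)]
  refine (Finset.sum_le_sum fun i _ => h i).trans (le_of_eq ?_)
  simp

/-- Proposition: Lipschitz property of the Hessian quadratic form. -/
theorem statement10 (n p : ℕ) (μ r : ℝ) (hμ : 0 < μ) (hr : r ∈ Set.Ioo (0 : ℝ) 1)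
    (X₀ : Matrix (Fin n) (Fin p) ℝ) :
    ∀ w ∈ GammaSet n ∩ {w | r ≤ ‖w‖}, ∀ w' ∈ GammaSet n ∩ {w | r ≤ ‖w‖},
      |⟪hessg n p μ X₀ w w, w⟫ / ‖w‖ ^ 2 - ⟪hessg n p μ X₀ w' w', w'⟫ / ‖w'‖ ^ 2| ≤
        (16 * (n : ℝ) ^ 3 / μ ^ 2 * Minf X₀ ^ 3 +
         8 * (n : ℝ) ^ ((3 : ℝ) / 2) / (μ * r) * Minf X₀ ^ 2 +
         48 * (n : ℝ) ^ ((5 : ℝ) / 2) / μ * Minf X₀ ^ 2 +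
         96 * (n : ℝ) ^ ((5 : ℝ) / 2) * Minf X₀) * ‖w - w'‖ := by
  rintro w ⟨hwΓ, hrw⟩ w' ⟨hwΓ', hrw'⟩
  obtain ⟨hr0, -⟩ := hr
  simp only [GammaSet, Set.mem_ofPred_eq] at hwΓ hwΓ' hrw hrw'
  have hw0 : 0 < ‖w‖ := hr0.trans_le hrw
  have hw0' : 0 < ‖w'‖ := hr0.trans_le hrw'
  rcases n with _ | m
  · norm_num at hwΓ
    exact absurd hw0 hwΓ.not_gt
  set N : ℝ := ((m + 1 : ℕ) : ℝ) with hN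
  have hN1 : 1 ≤ N := by rw [hN]; exact_mod_cast Nat.succ_le_succ (Nat.zero_le m)
  set κ : ℝ := √N with hκ
  have hκ0 : 0 < κ := Real.sqrt_pos.2 (by linarith)
  have hκ2 : κ ^ 2 = N := Real.sq_sqrt (by linarith)
  set T : ℝ := √((4 * N - 1) / (4 * N)) with hTdef
  have hT2 : T ^ 2 = (4 * N - 1) / (4 * N) :=
    Real.sq_sqrt (div_nonneg (by linarith) (by linarith))
  have hT : (1 / (2 * κ)) ^ 2 ≤ 1 - T ^ 2 := by
    rw [hT2, div_pow, mul_pow, hκ2]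
    apply le_of_eq
    field_simp
    ring
  have hT1 : T < 1 := by
    rw [hTdef, Real.sqrt_lt' one_pos, div_lt_iff₀ (by linarith)]
    linarith
  have hB := Minf_nonneg X₀
  have h3 : N ^ ((3 : ℝ) / 2) = κ ^ 3 := by
    rw [hκ, Real.sqrt_eq_rpow, ← Real.rpow_mul_natCast (by linarith)]; norm_num
  have h5 : N ^ ((5 : ℝ) / 2) = κ ^ 5 := by
    rw [hκ, Real.sqrt_eq_rpow, ← Real.rpow_mul_natCast (by linarith)]; norm_num
  set L := 16 * N ^ 3 / μ ^ 2 * Minf X₀ ^ 3 +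
         8 * N ^ ((3 : ℝ) / 2) / (μ * r) * Minf X₀ ^ 2 +
         48 * N ^ ((5 : ℝ) / 2) / μ * Minf X₀ ^ 2 +
         96 * N ^ ((5 : ℝ) / 2) * Minf X₀ with hL
  have hL0 : 0 ≤ L * ‖w - w'‖ := by positivity
  have hcol : ∀ k, |radialSecondDeriv μ (WithLp.toLp 2 fun i => X₀ i.castSucc k)
      (X₀ (Fin.last m) k) w - radialSecondDeriv μ (WithLp.toLp 2 fun i => X₀ i.castSucc k)
      (X₀ (Fin.last m) k) w'| ≤ L * ‖w - w'‖ := by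
    intro k
    refine (abs_radialSecondDeriv_sub_le hμ (by positivity : 0 < 1 / (2 * κ)) hr0
      (by positivity : 0 ≤ κ * Minf X₀) hT (norm_sq_add_sq_le_Minf m p X₀ k)
      (abs_le_Minf X₀ _ k) hwΓ.le hwΓ'.le hrw hrw').trans (le_of_eq ?_)
    rw [hL, h3, h5, ← hκ2]
    field_simp
    ring
  simp only [hessg]
  have e : ∀ v : EuclideanSpace ℝ (Fin m), 0 < ‖v‖ → ‖v‖ < 1 →
      ⟪fderiv ℝ (fun v => gradient (gfun (m + 1) p μ X₀) v) v v, v⟫ / ‖v‖ ^ 2 =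
      (p : ℝ)⁻¹ * ∑ k, radialSecondDeriv μ (WithLp.toLp 2 fun i => X₀ i.castSucc k)
        (X₀ (Fin.last m) k) v := by
    intro v hv0 hv1
    rw [gfun_succ_eq]
    exact inner_fderiv_gradient_average Finset.univ hμ _ _ _ hv0 hv1
  have ew := e w hw0 (hwΓ.trans hT1)
  have ew' := e w' hw0' (hwΓ'.trans hT1)
  refine (congrArg abs (congrArg₂ (· - ·) ew ew')).trans_le ?_
  rw [← mul_sub, ← Finset.sum_sub_distrib, abs_mul, abs_of_nonneg (by positivity)]
  have hsum := (Finset.abs_sum_le_sum_abs _ _).trans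
    (Finset.sum_le_sum fun (k : Fin p) (_ : k ∈ Finset.univ) => hcol k)
  rw [Finset.sum_const, Finset.card_univ, Fintype.card_fin, nsmul_eq_mul] at hsum
  refine (mul_le_mul_of_nonneg_left hsum (by positivity)).trans ?_
  rw [← mul_assoc]
  exact mul_le_of_le_one_left hL0 (inv_mul_le_one)

end
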